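/- For all integers k ≥ 2 and m ≥ 1, there exists a binary matrix with (2^k−1)m − k rows and (2^k−1)m columns in which every nonempty 1-free set of columns has cardinality at least 2^{k−1}·m. -/

import Mathlib

theorem aux_rec (t : ℕ) (k : ℕ) : ∃ (α ρ : Type) (_ : Fintype α) (_ : Fintype ρ)
    (B : ρ → α → Prop), Fintype.card α + (t + 1) = 2 ^ k * (t + 1) ∧
      Fintype.card ρ + k = Fintype.card α ∧
      ∀ S : Finset α, S.Nonempty → (∀ i, ¬ ∃! j, j ∈ S ∧ B i j) →
        2 ^ k * (t + 1) ≤ 2 * S.card := by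
  classical
  induction k with
  | zero =>
    refine ⟨Empty, Empty, inferInstance, inferInstance, fun _ _ => True, by simp, by simp, ?_⟩
    rintro S ⟨x, _⟩
    exact x.elim
  | succ k ih =>
    obtain ⟨α, ρ, _, _, B, h1, h2, h3⟩ := ih
    refine ⟨(α ⊕ α) ⊕ Fin (t + 1), (ρ ⊕ α) ⊕ Fin t, inferInstance, inferInstance,
      fun r c => match r with
        | .inl (.inl r) => ∃ a, B r a ∧ c = .inl (.inl a)
        | .inl (.inr u) => c = .inl (.inl u) ∨ c = .inl (.inr u) ∨ c = .inr 0
        | .inr i => c = .inr 0 ∨ c = .inr i.succ, ?_, ?_, ?_⟩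
    · simp only [Fintype.card_sum, Fintype.card_fin, pow_succ]
      linarith
    · simp only [Fintype.card_sum, Fintype.card_fin]
      linarith
    intro S hS hf
    have hA : ∀ r, ¬ ∃! a, Sum.inl (Sum.inl a) ∈ S ∧ B r a := by
      rintro r ⟨a, ⟨ha, hb⟩, hu⟩
      refine hf (.inl (.inl r)) ⟨.inl (.inl a), ⟨ha, a, hb, rfl⟩, ?_⟩
      rintro _ ⟨hc, a', hb', rfl⟩
      rw [hu a' ⟨hc, hb'⟩]
    have hE : ∀ i : Fin (t + 1), (Sum.inr i : (α ⊕ α) ⊕ Fin (t + 1)) ∈ S ↔ Sum.inr 0 ∈ S := by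
      intro i
      refine Fin.cases Iff.rfl (fun i => ?_) i
      by_contra hne
      apply hf (.inr i)
      by_cases h0 : (Sum.inr 0 : (α ⊕ α) ⊕ Fin (t + 1)) ∈ S
      · refine ⟨.inr 0, ⟨h0, Or.inl rfl⟩, ?_⟩
        rintro _ ⟨hc, rfl | rfl⟩ <;> tauto
      · refine ⟨.inr i.succ, ⟨by tauto, Or.inr rfl⟩, ?_⟩
        rintro _ ⟨hc, rfl | rfl⟩ <;> tauto
    have hcard : S.card = (Finset.univ.filter fun a => Sum.inl (Sum.inl a) ∈ S).card
        + (Finset.univ.filter fun a => Sum.inl (Sum.inr a) ∈ S).card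
        + (Finset.univ.filter fun i => (Sum.inr i : (α ⊕ α) ⊕ Fin (t + 1)) ∈ S).card := by
      have : S.card = ∑ x, if x ∈ S then 1 else 0 := by simp
      rw [this]
      simp only [Fintype.sum_sum_type, Finset.card_filter]
    by_cases h0 : (Sum.inr 0 : (α ⊕ α) ⊕ Fin (t + 1)) ∈ S
    · have e1 : (Finset.univ.filter fun i => (Sum.inr i : (α ⊕ α) ⊕ Fin (t + 1)) ∈ S).card
          = t + 1 := by
        simp [hE, h0]
      have e2 : Fintype.card α ≤ (Finset.univ.filter fun a => Sum.inl (Sum.inl a) ∈ S).card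
        + (Finset.univ.filter fun a => Sum.inl (Sum.inr a) ∈ S).card := by
        refine le_trans ?_ (Finset.card_union_le _ _)
        rw [← Finset.card_univ]
        apply Finset.card_le_card
        intro u _
        by_contra hu
        simp only [Finset.mem_union, Finset.mem_filter, Finset.mem_univ, true_and, not_or] at hu
        apply hf (.inl (.inr u))
        refine ⟨.inr 0, ⟨h0, Or.inr (Or.inr rfl)⟩, ?_⟩
        rintro _ ⟨hc, rfl | rfl | rfl⟩ <;> tauto
      rw [pow_succ]
      linarith
    · have hU : ∀ u, Sum.inl (Sum.inr u) ∈ S ↔ Sum.inl (Sum.inl u) ∈ S := by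
        intro u
        by_contra hne
        apply hf (.inl (.inr u))
        by_cases h4 : Sum.inl (Sum.inl u) ∈ S
        · refine ⟨.inl (.inl u), ⟨h4, Or.inl rfl⟩, ?_⟩
          rintro _ ⟨hc, rfl | rfl | rfl⟩ <;> tauto
        · refine ⟨.inl (.inr u), ⟨by tauto, Or.inr (Or.inl rfl)⟩, ?_⟩
          rintro _ ⟨hc, rfl | rfl | rfl⟩ <;> tauto
      have h5 := h3 (Finset.univ.filter fun a => Sum.inl (Sum.inl a) ∈ S) (by
        obtain ⟨(x | x) | x, hx⟩ := hS
        · exact ⟨x, by simpa using hx⟩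
        · exact ⟨x, by simpa [hU] using hx⟩
        · exact absurd ((hE x).1 hx) h0) (by simpa using hA)
      simp only [hU] at hcard
      rw [pow_succ]
      linarith

/-- For all integers `k ≥ 2` and `m ≥ 1`, there exists a binary matrix with
`(2^k−1)m − k` rows and `(2^k−1)m` columns in which every nonempty 1-free set of columns
has cardinality at least `2^(k−1) * m`. -/
theorem stmt_10 (k m : ℕ) (hk : 2 ≤ k) (hm : 1 ≤ m) :
    ∃ A : Fin ((2 ^ k - 1) * m - k) → Fin ((2 ^ k - 1) * m) → ℕ,
      (∀ i j, A i j ≤ 1) ∧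
      ∀ S : Finset (Fin ((2 ^ k - 1) * m)), S.Nonempty →
        (∀ i, ∑ j ∈ S, A i j ≠ 1) →
        2 ^ (k - 1) * m ≤ S.card := by
  classical
  obtain ⟨t, rfl⟩ : ∃ t, m = t + 1 := ⟨m - 1, by omega⟩
  obtain ⟨α, ρ, _, _, B, h1, h2, h3⟩ := aux_rec t k
  have c1 : Fintype.card α = (2 ^ k - 1) * (t + 1) := by
    rw [Nat.sub_mul, one_mul]; omega
  have c2 : Fintype.card ρ = (2 ^ k - 1) * (t + 1) - k := by omega
  let e := Fintype.equivFinOfCardEq c1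
  let f := Fintype.equivFinOfCardEq c2
  refine ⟨fun i j => if B (f.symm i) (e.symm j) then 1 else 0, ?_, ?_⟩
  · intro i j
    dsimp only
    split_ifs <;> simp
  intro S hS hf
  have h := h3 (S.map e.symm.toEmbedding) (by simpa using hS) (by
    rintro r ⟨a, ⟨ha, hb⟩, hu⟩
    apply hf (f r)
    rw [← Finset.card_filter, Finset.card_eq_one]
    refine ⟨e a, ?_⟩
    ext j
    simp only [Finset.mem_filter, Finset.mem_singleton, Equiv.symm_apply_apply]
    simp only [Finset.mem_map_equiv, Equiv.symm_symm] at ha hu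
    constructor
    · rintro ⟨hj, hbj⟩
      rw [← hu (e.symm j) ⟨by simpa using hj, hbj⟩]
      simp
    · rintro rfl
      exact ⟨ha, by simpa using hb⟩)
  rw [Finset.card_map] at h
  have hp : 2 ^ k = 2 ^ (k - 1) * 2 := by
    rw [← pow_succ]
    congr 1
    omega
  have hq : 2 ^ k * (t + 1) = 2 * (2 ^ (k - 1) * (t + 1)) := by
    rw [hp]
    ring
  omega
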